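/- (Proposition 2, part (a)) Suppose f_A = sup_{a ∈ A} E^a(T_{B∪C}) and f_B = sup_{b ∈ B} E^b(T_{A∪C}) are finite, and ψ·σ < 1 where ψ = sup_{a ∈ A} ψ_a and σ = sup_{b ∈ B} σ_b. Then for every a ∈ A, E^a(T_{B∪C}) ≤ E^a(T_C) ≤ E^a(T_{B∪C}) + ψ_a · (f_B + σ f_A) / (1 − ψσ). -/

import Mathlib

open MeasureTheory ENNReal

/-- The first hitting time of the set `D` along the path `s`, valued in `ℕ∞`
(`⊤` if the path never visits `D`). -/
noncomputable def hitTime {Ω : Type*} (D : Set Ω) (s : ℕ → Ω) : ℕ∞ :=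
  ⨅ (k : ℕ) (_ : s k ∈ D), (k : ℕ∞)

/-- The path of the walk started at `x` with steps `ξ` : `S_n = x + ∑_{j<n} ξ j`. -/
def walk {Ω : Type*} [AddCommGroup Ω] (x : Ω) (ξ : ℕ → Ω) (n : ℕ) : Ω :=
  x + ∑ j ∈ Finset.range n, ξ j

/-- A random walk on a group `Ω`, described by the common law `ν` of its i.i.d.
steps together with the joint law `μ` of the step sequence (characterized on
cylinder sets as the product of `ν`'s). -/
structure RandomWalk (Ω : Type*) [AddCommGroup Ω] [MeasurableSpace Ω] where
  ν : Measure Ω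
  probν : IsProbabilityMeasure ν
  μ : Measure (ℕ → Ω)
  probμ : IsProbabilityMeasure μ
  iid : ∀ (n : ℕ) (f : Fin n → Ω),
    μ {ξ | ∀ i : Fin n, ξ (i : ℕ) = f i} = ∏ i : Fin n, ν {f i}

variable {Ω : Type*} [AddCommGroup Ω] [MeasurableSpace Ω]

/-- `P^x(θ)` : the probability that the path `(S_n)` of the walk started at `x`
has the property `θ`. -/
noncomputable def RandomWalk.P (W : RandomWalk Ω) (x : Ω) (θ : Set (ℕ → Ω)) : ℝ≥0∞ :=
  W.μ {ξ | walk x ξ ∈ θ}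

/-- `E^x(T_D)` : the expected hitting time of `D` for the walk started at `x`. -/
noncomputable def RandomWalk.E (W : RandomWalk Ω) (x : Ω) (D : Set Ω) : ℝ≥0∞ :=
  ∫⁻ ξ, (hitTime D (walk x ξ) : ℝ≥0∞) ∂W.μ

/-- The truncated Green's function `G_D(x,y) = ∑_{j≥0} P^x(S_j = y, j < T_{Dᶜ})`. -/
noncomputable def RandomWalk.G (W : RandomWalk Ω) (D : Set Ω) (x y : Ω) : ℝ≥0∞ :=
  ∑' j : ℕ, W.P x {s | s j = y ∧ (j : ℕ∞) < hitTime Dᶜ s}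

/-- The hitting distribution `H_D(x,y) = P^x(S_{T_D} = y)`. -/
noncomputable def RandomWalk.H (W : RandomWalk Ω) (D : Set Ω) (x y : Ω) : ℝ≥0∞ :=
  W.P x {s | ∃ k : ℕ, hitTime D s = (k : ℕ∞) ∧ s k = y}

/-!
Until the walk enters `B ∪ C` the clocks `T_C` and `T_{B∪C}` agree, and after an entry into `B` the
remaining time costs on average at most `g_B = sup_{b ∈ B} E^b(T_C)`. Hence
`E^x(T_C) ≤ E^x(T_{B∪C}) + P^x(T_B < T_C) g_B`, and likewise with `A` in place of `B`. Taking
suprema over `A` and `B` gives `g_B ≤ f_B + σ (f_A + ψ g_B)`, so `g_B ≤ (f_B + σ f_A) / (1 - ψσ)`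
provided that `g_B` is finite. Finiteness is automatic for the truncated times `min(T_C, n)`, which
satisfy the same inequalities; let `n → ∞`.
-/

section HitTime

variable {α : Type*} {D D' : Set α} {s : ℕ → α}

theorem hitTime_eq_zero (h : s 0 ∈ D) : hitTime D s = 0 :=
  nonpos_iff_eq_zero.1 (iInf₂_le 0 h)

theorem hitTime_eq_tail_add_one (h : s 0 ∉ D) :
    hitTime D s = hitTime D (fun n ↦ s (n + 1)) + 1 := by
  simp only [hitTime, ENat.iInf_add]
  refine le_antisymm (le_iInf₂ fun k hk ↦ iInf₂_le (k + 1) hk) (le_iInf₂ fun k hk ↦ ?_)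
  cases k with
  | zero => exact absurd hk h
  | succ k => exact iInf₂_le k hk

theorem hitTime_anti (h : D ⊆ D') (s : ℕ → α) : hitTime D' s ≤ hitTime D s :=
  biInf_mono fun _ hk ↦ h hk

variable [MeasurableSpace α]

theorem measurable_toENNReal_hitTime (hD : MeasurableSet D) :
    Measurable fun s : ℕ → α ↦ (hitTime D s : ℝ≥0∞) := by
  classical
  simp only [hitTime, ENat.toENNReal_iInf, iInf_eq_if, apply_ite ENat.toENNReal]
  exact .iInf fun k ↦ .ite (measurable_pi_apply k hD) measurable_const measurable_const

theorem measurableSet_hitTime_lt_hitTime (hD : MeasurableSet D) (hD' : MeasurableSet D') :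
    MeasurableSet {s : ℕ → α | hitTime D s < hitTime D' s} := by
  simpa only [ENat.toENNReal_lt] using
    measurableSet_lt (measurable_toENNReal_hitTime hD) (measurable_toENNReal_hitTime hD')

end HitTime

section Cylinder

variable {X : ℕ → Type*}

theorem isPiSystem_cylinder : IsPiSystem {s : Set (∀ n, X n) | ∃ x n, s = PiNat.cylinder x n} := by
  rintro _ ⟨x, m, rfl⟩ _ ⟨y, n, rfl⟩ ⟨z, hzx, hzy⟩
  rw [← PiNat.mem_cylinder_iff_eq.1 hzx, ← PiNat.mem_cylinder_iff_eq.1 hzy]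
  rcases le_total m n with h | h
  · exact ⟨z, n, Set.inter_eq_right.2 (PiNat.cylinder_anti z h)⟩
  · exact ⟨z, m, Set.inter_eq_left.2 (PiNat.cylinder_anti z h)⟩

variable [∀ n, Countable (X n)] [∀ n, MeasurableSpace (X n)] [∀ n, MeasurableSingletonClass (X n)]

theorem measurableSpace_pi_eq_generateFrom_cylinder :
    (MeasurableSpace.pi : MeasurableSpace (∀ n, X n)) =
      .generateFrom {s | ∃ x n, s = PiNat.cylinder x n} := by
  let (n : ℕ) : TopologicalSpace (X n) := ⊥
  have (n : ℕ) : DiscreteTopology (X n) := ⟨rfl⟩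
  exact Pi.borelSpace.measurable_eq.trans
    (PiNat.isTopologicalBasis_cylinders X).borel_eq_generateFrom

theorem ext_of_cylinder {μ ν : Measure (∀ n, X n)} [IsFiniteMeasure μ]
    (h : ∀ x n, μ (PiNat.cylinder x n) = ν (PiNat.cylinder x n)) : μ = ν := by
  obtain _ | ⟨⟨x⟩⟩ := isEmpty_or_nonempty (∀ n, X n)
  · exact Subsingleton.elim _ _
  · refine ext_of_generate_finite _ measurableSpace_pi_eq_generateFrom_cylinder
      isPiSystem_cylinder ?_ (by simpa using h x 0)
    rintro _ ⟨x, n, rfl⟩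
    exact h x n

end Cylinder

section InfinitePi

open ProbabilityTheory

variable {X : ℕ → Type*} [∀ n, MeasurableSpace (X n)]
  (P : ∀ n, Measure (X n)) [∀ n, IsProbabilityMeasure (P n)]

theorem indepFun_head_tail_infinitePi :
    IndepFun (fun ξ : ∀ n, X n ↦ ξ 0) (fun ξ n ↦ ξ (n + 1)) (Measure.infinitePi P) := by
  have h := indep_iSup_of_disjoint (fun n ↦ (measurable_pi_apply n).comap_le)
    (iIndepFun_infinitePi (P := P) (X := fun _ ↦ id) fun _ ↦ measurable_id)
    (S := {0}) (T := Set.range Nat.succ) (by simp)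
  refine indep_of_indep_of_le_right (indep_of_indep_of_le_left h ?_) ?_
  · exact le_iSup₂_of_le 0 rfl le_rfl
  · simp only [MeasurableSpace.pi, MeasurableSpace.comap_iSup, MeasurableSpace.comap_comp]
    exact iSup_le fun n ↦ le_iSup₂_of_le (n + 1) ⟨n, rfl⟩ le_rfl

theorem infinitePi_map_head_tail :
    (Measure.infinitePi P).map (fun ξ ↦ (ξ 0, fun n ↦ ξ (n + 1))) =
      (P 0).prod (Measure.infinitePi fun n ↦ P (n + 1)) := by
  have h_head : Measurable fun ξ : ∀ n, X n ↦ ξ 0 := by fun_prop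
  have h_tail : Measurable fun (ξ : ∀ n, X n) n ↦ ξ (n + 1) := by fun_prop
  rw [(indepFun_head_tail_infinitePi P).map_prod_eq_prod_map_map h_head.aemeasurable
    h_tail.aemeasurable, Measure.infinitePi_map_eval,
    Measure.map_infinitePi_infinitePi_of_inj (f := fun n ↦ n + 1) (add_left_injective 1)]

end InfinitePi

section Walk

variable {G : Type*} [AddCommGroup G]

theorem walk_zero (x : G) (ξ : ℕ → G) : walk x ξ 0 = x := by
  simp [walk]

theorem walk_tail (x : G) (ξ : ℕ → G) :
    (fun n ↦ walk x ξ (n + 1)) = walk (x + ξ 0) (fun n ↦ ξ (n + 1)) := by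
  funext n
  simp only [walk, Finset.sum_range_succ']
  abel

@[fun_prop]
theorem measurable_walk [MeasurableSpace G] [MeasurableAdd₂ G] {β : Type*} [MeasurableSpace β]
    {x : β → G} {ξ : β → ℕ → G} (hx : Measurable x) (hξ : Measurable ξ) :
    Measurable fun b ↦ walk (x b) (ξ b) := by
  unfold walk
  fun_prop

end Walk

theorem le_div_one_sub_of_le_add_mul {u a q : ℝ≥0∞} (hu : u ≠ ⊤) (hq : q < 1)
    (h : u ≤ a + q * u) : u ≤ a / (1 - q) := by
  have hq' : 1 - q ≠ 0 := (tsub_pos_of_lt hq).ne'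
  rw [ENNReal.le_div_iff_mul_le (.inl hq') (.inl (by finiteness)), mul_comm,
    ENNReal.sub_mul fun _ _ ↦ hu, one_mul]
  exact tsub_le_iff_right.2 h

namespace RandomWalk

section Truncated

variable (W : RandomWalk Ω)

instance : IsProbabilityMeasure W.ν := W.probν

instance : IsProbabilityMeasure W.μ := W.probμ

/-- `E^x(min(T_D, n))`: the expected hitting time of `D`, truncated at `n` so that it is finite. -/
noncomputable def truncE (n : ℕ) (x : Ω) (D : Set Ω) : ℝ≥0∞ :=
  ∫⁻ ξ, min (hitTime D (walk x ξ) : ℝ≥0∞) n ∂W.μ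

variable {D : Set Ω} {x : Ω}

theorem truncE_mono {m n : ℕ} (h : m ≤ n) (x : Ω) (D : Set Ω) :
    W.truncE m x D ≤ W.truncE n x D := by
  unfold truncE
  gcongr

theorem truncE_le_natCast (n : ℕ) (x : Ω) (D : Set Ω) : W.truncE n x D ≤ n :=
  (lintegral_mono fun _ ↦ min_le_right _ _).trans (by simp)

theorem truncE_eq_zero_of_mem (n : ℕ) (hx : x ∈ D) : W.truncE n x D = 0 := by
  simp [truncE, hitTime_eq_zero, walk_zero, hx]

theorem P_hitTime_lt_hitTime_eq_one {B C : Set Ω} (hB : x ∈ B) (hC : x ∉ C) :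
    W.P x {s | hitTime B s < hitTime C s} = 1 := by
  simp [P, hitTime_eq_zero, hitTime_eq_tail_add_one, walk_zero, hB, hC]

end Truncated

section FirstStep

variable [Countable Ω] [MeasurableSingletonClass Ω] (W : RandomWalk Ω) {x : Ω}

theorem μ_eq_infinitePi : W.μ = Measure.infinitePi fun _ ↦ W.ν := by
  refine ext_of_cylinder fun x n ↦ ?_
  have h_iid : W.μ (PiNat.cylinder x n) = ∏ i : Fin n, W.ν {x i} := by
    rw [← W.iid]
    congr 1
    ext ξ
    simp [Fin.forall_iff]
  rw [h_iid, PiNat.cylinder_eq_pi, Measure.infinitePi_pi _ fun i _ ↦ measurableSet_singleton (x i),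
    Finset.prod_range]

theorem lintegral_walk_tail {F : (ℕ → Ω) → ℝ≥0∞} (hF : Measurable F) (x : Ω) :
    ∫⁻ ξ, F (fun n ↦ walk x ξ (n + 1)) ∂W.μ = ∫⁻ y, ∫⁻ ξ, F (walk (x + y) ξ) ∂W.μ ∂W.ν := by
  have h_meas : Measurable fun p : Ω × (ℕ → Ω) ↦ F (walk (x + p.1) p.2) :=
    hF.comp (by fun_prop)
  have h_map : W.μ.map (fun ξ ↦ (ξ 0, fun n ↦ ξ (n + 1))) = W.ν.prod W.μ := by
    simpa only [← μ_eq_infinitePi] using infinitePi_map_head_tail fun _ ↦ W.ν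
  calc ∫⁻ ξ, F (fun n ↦ walk x ξ (n + 1)) ∂W.μ
      = ∫⁻ ξ, F (walk (x + ξ 0) (fun n ↦ ξ (n + 1))) ∂W.μ := by simp only [walk_tail]
    _ = ∫⁻ p, F (walk (x + p.1) p.2) ∂W.ν.prod W.μ := by
      rw [← h_map, lintegral_map h_meas (by fun_prop)]
    _ = ∫⁻ y, ∫⁻ ξ, F (walk (x + y) ξ) ∂W.μ ∂W.ν :=
      lintegral_prod _ h_meas.aemeasurable

theorem E_eq_lintegral_E_add_one {D : Set Ω} (hx : x ∉ D) :
    W.E x D = ∫⁻ y, W.E (x + y) D ∂W.ν + 1 := by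
  have hD := measurable_toENNReal_hitTime (.of_discrete : MeasurableSet D)
  simp only [E, ← W.lintegral_walk_tail hD, hitTime_eq_tail_add_one, walk_zero, hx,
    not_false_eq_true, ENat.toENNReal_add, ENat.toENNReal_one]
  simp [lintegral_add_right]

theorem truncE_succ {D : Set Ω} (hx : x ∉ D) (n : ℕ) :
    W.truncE (n + 1) x D = ∫⁻ y, W.truncE n (x + y) D ∂W.ν + 1 := by
  have hD := (measurable_toENNReal_hitTime (.of_discrete : MeasurableSet D)).min
    (measurable_const (a := (n : ℝ≥0∞)))
  simp only [truncE, ← W.lintegral_walk_tail hD, hitTime_eq_tail_add_one, walk_zero, hx,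
    not_false_eq_true, ENat.toENNReal_add, ENat.toENNReal_one, Nat.cast_succ, min_add_add_right]
  simp [lintegral_add_right]

theorem P_tail_mem {θ : Set (ℕ → Ω)} (hθ : MeasurableSet θ) (x : Ω) :
    W.P x {s | (fun n ↦ s (n + 1)) ∈ θ} = ∫⁻ y, W.P (x + y) θ ∂W.ν := by
  have h_meas : Measurable (θ.indicator (1 : (ℕ → Ω) → ℝ≥0∞)) := measurable_one.indicator hθ
  have h_walk (z : Ω) : Measurable (walk z) := by fun_prop
  have h_tail : Measurable fun (ξ : ℕ → Ω) n ↦ walk x ξ (n + 1) := by fun_prop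
  calc W.P x {s | (fun n ↦ s (n + 1)) ∈ θ}
      = ∫⁻ ξ, θ.indicator 1 (fun n ↦ walk x ξ (n + 1)) ∂W.μ :=
        (lintegral_indicator_one (h_tail hθ)).symm
    _ = ∫⁻ y, ∫⁻ ξ, θ.indicator 1 (walk (x + y) ξ) ∂W.μ ∂W.ν := W.lintegral_walk_tail h_meas x
    _ = ∫⁻ y, W.P (x + y) θ ∂W.ν :=
      lintegral_congr fun y ↦ lintegral_indicator_one (h_walk (x + y) hθ)

theorem P_hitTime_lt_hitTime_eq_lintegral {B C : Set Ω} (hB : x ∉ B) (hC : x ∉ C) :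
    W.P x {s | hitTime B s < hitTime C s} =
      ∫⁻ y, W.P (x + y) {s | hitTime B s < hitTime C s} ∂W.ν := by
  rw [← W.P_tail_mem (measurableSet_hitTime_lt_hitTime .of_discrete .of_discrete)]
  simp [P, hitTime_eq_tail_add_one, walk_zero, hB, hC]

end FirstStep

section Comparison

variable [Countable Ω] [MeasurableSingletonClass Ω] (W : RandomWalk Ω) {A B C : Set Ω}

theorem iSup_truncE (x : Ω) (D : Set Ω) : ⨆ n, W.truncE n x D = W.E x D := by
  have hD : Measurable fun ξ ↦ (hitTime D (walk x ξ) : ℝ≥0∞) :=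
    (measurable_toENNReal_hitTime .of_discrete).comp (by fun_prop)
  simp only [truncE, E]
  rw [← lintegral_iSup (fun n ↦ hD.min measurable_const) fun m n h ξ ↦ by dsimp only; gcongr]
  simp [← inf_iSup_eq, ENNReal.iSup_natCast]

theorem truncE_le_E_union_add (n : ℕ) {g : ℝ≥0∞} (hg : ∀ b ∈ B, W.truncE n b C ≤ g) (x : Ω) :
    W.truncE n x C ≤ W.E x (B ∪ C) + W.P x {s | hitTime B s < hitTime C s} * g := by
  induction n generalizing x with
  | zero => simp [truncE]
  | succ n ih =>
    by_cases hC : x ∈ C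
    · simp [W.truncE_eq_zero_of_mem _ hC]
    by_cases hB : x ∈ B
    · rw [W.P_hitTime_lt_hitTime_eq_one hB hC, one_mul]
      exact (hg x hB).trans le_add_self
    · have ih' := ih fun b hb ↦ (W.truncE_mono n.le_succ b C).trans (hg b hb)
      rw [W.truncE_succ hC, W.E_eq_lintegral_E_add_one (by simp [hB, hC]),
        W.P_hitTime_lt_hitTime_eq_lintegral hB hC, ← lintegral_mul_const _ .of_discrete,
        add_right_comm, ← lintegral_add_left .of_discrete]
      gcongr with y
      exact ih' (x + y)

theorem truncE_le_div_one_sub {fA fB ψ σ : ℝ≥0∞}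
    (hfA : ∀ a ∈ A, W.E a (B ∪ C) ≤ fA) (hfB : ∀ b ∈ B, W.E b (A ∪ C) ≤ fB)
    (hψ : ∀ a ∈ A, W.P a {s | hitTime B s < hitTime C s} ≤ ψ)
    (hσ : ∀ b ∈ B, W.P b {s | hitTime A s < hitTime C s} ≤ σ)
    (hψσ : ψ * σ < 1) (n : ℕ) :
    ∀ b ∈ B, W.truncE n b C ≤ (fB + σ * fA) / (1 - ψ * σ) := by
  set gA := ⨆ a ∈ A, W.truncE n a C
  set gB := ⨆ b ∈ B, W.truncE n b C
  have hgB_ne_top : gB ≠ ⊤ :=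
    ne_top_of_le_ne_top (ENNReal.natCast_ne_top n) (iSup₂_le fun b _ ↦ W.truncE_le_natCast n b C)
  have hgA_le : gA ≤ fA + ψ * gB := iSup₂_le fun a ha ↦
    (W.truncE_le_E_union_add n (le_iSup₂ (f := fun b _ ↦ W.truncE n b C)) a).trans <| by
      gcongr
      exacts [hfA a ha, hψ a ha]
  have hgB_le : gB ≤ fB + σ * gA := iSup₂_le fun b hb ↦
    (W.truncE_le_E_union_add n (le_iSup₂ (f := fun a _ ↦ W.truncE n a C)) b).trans <| by
      gcongr
      exacts [hfB b hb, hσ b hb]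
  refine iSup₂_le_iff.1 (le_div_one_sub_of_le_add_mul hgB_ne_top hψσ ?_)
  calc gB ≤ fB + σ * (fA + ψ * gB) := hgB_le.trans (by gcongr)
    _ = fB + σ * fA + ψ * σ * gB := by ring

end Comparison

end RandomWalk

theorem prop2a_general [Countable Ω] [MeasurableSingletonClass Ω] (W : RandomWalk Ω)
    (A B C : Set Ω) {fA fB ψ σ : ℝ≥0∞}
    (hfA : ∀ a ∈ A, W.E a (B ∪ C) ≤ fA) (hfB : ∀ b ∈ B, W.E b (A ∪ C) ≤ fB)
    (hψ : ∀ a ∈ A, W.P a {s | hitTime B s < hitTime C s} ≤ ψ)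
    (hσ : ∀ b ∈ B, W.P b {s | hitTime A s < hitTime C s} ≤ σ) (hψσ : ψ * σ < 1) (x : Ω) :
    W.E x (B ∪ C) ≤ W.E x C ∧ W.E x C ≤ W.E x (B ∪ C) +
      W.P x {s | hitTime B s < hitTime C s} * (fB + σ * fA) / (1 - ψ * σ) := by
  refine ⟨lintegral_mono fun ξ ↦ ENat.toENNReal_mono (hitTime_anti Set.subset_union_right _), ?_⟩
  rw [mul_div_assoc, ← W.iSup_truncE x C]
  exact iSup_le fun n ↦ W.truncE_le_E_union_add n (W.truncE_le_div_one_sub hfA hfB hψ hσ hψσ n) x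

/-- Proposition 2, part (a): if `f_A, f_B` are finite and `ψσ < 1`, then for
every `a ∈ A`,
`E^a(T_{B∪C}) ≤ E^a(T_C) ≤ E^a(T_{B∪C}) + ψ_a (f_B + σ f_A)/(1 - ψσ)`. -/
theorem prop2a
    {Ω : Type*} [AddCommGroup Ω] [Countable Ω] [MeasurableSpace Ω]
    [MeasurableSingletonClass Ω] (W : RandomWalk Ω) (A B C : Set Ω)
    (hcover : A ∪ B ∪ C = Set.univ) (hAB : Disjoint A B) (hAC : Disjoint A C)
    (hBC : Disjoint B C)
    (ψ' σ' : Ω → ℝ≥0∞)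
    (hψdef : ∀ x, ψ' x = W.P x {s | hitTime B s < hitTime C s})
    (hσdef : ∀ x, σ' x = W.P x {s | hitTime A s < hitTime C s})
    (fA fB ψ σ : ℝ≥0∞)
    (hfAdef : fA = ⨆ a : A, W.E a (B ∪ C)) (hfA : fA ≠ ⊤)
    (hfBdef : fB = ⨆ b : B, W.E b (A ∪ C)) (hfB : fB ≠ ⊤)
    (hψ : ψ = ⨆ a : A, ψ' a) (hσ : σ = ⨆ b : B, σ' b)
    (hψσ : ψ * σ < 1) :
    ∀ a ∈ A, W.E a (B ∪ C) ≤ W.E a C ∧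
      W.E a C ≤ W.E a (B ∪ C) + ψ' a * (fB + σ * fA) / (1 - ψ * σ) := by
  obtain rfl := funext hψdef
  obtain rfl := funext hσdef
  exact fun a _ ↦ prop2a_general W A B C (Subtype.forall.1 (iSup_le_iff.1 hfAdef.ge))
    (Subtype.forall.1 (iSup_le_iff.1 hfBdef.ge)) (Subtype.forall.1 (iSup_le_iff.1 hψ.ge))
    (Subtype.forall.1 (iSup_le_iff.1 hσ.ge)) hψσ a
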